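/- Let G be a finite pseudo-solvable group that is not solvable, and suppose G has no element of order 15. Then G has normal subgroups N and M with N ≤ M, both normal in G, such that N is solvable, the quotient M/N is isomorphic to the alternating group A₅, and the quotient G/M is solvable. (In particular, G has exactly one non-solvable chief factor, and it is isomorphic to A₅.) -/

import Mathlib

/-- A finite group is *pseudo-solvable* if it has a subnormal series whose factors are
all cyclic or isomorphic to the alternating group `A₅`. -/
def IsPseudoSolvable (G : Type*) [Group G] : Prop :=
  ∃ (n : ℕ) (H : Fin (n + 1) → Subgroup G),
    H 0 = ⊥ ∧ H (Fin.last n) = ⊤ ∧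
    ∀ i : Fin n, H i.castSucc ≤ H i.succ ∧
      ∃ hN : ((H i.castSucc).subgroupOf (H i.succ)).Normal,
        haveI := hN
        IsCyclic (H i.succ ⧸ (H i.castSucc).subgroupOf (H i.succ)) ∨
        Nonempty ((H i.succ ⧸ (H i.castSucc).subgroupOf (H i.succ)) ≃* alternatingGroup (Fin 5))

/-! The solvable-by-`A₅`-by-solvable structure is carried up the subnormal series. The upper term of
the section is taken in the derived series, hence characteristic, and the lower term is its largest
solvable normal subgroup, so both stay normal in the next group `G` of the series. A second factor
`A₅` above such a section `M/N` is impossible: modulo `N`, the Frattini argument for a Sylow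
`3`-subgroup `Q` of `M/N` gives an element of order `5` normalizing `Q`, which centralizes `Q`
because `|Aut Q| = 2`; its product with a generator of `Q` has order `15`, and a power of any lift
to `G` again has order `15`. -/

section ElementOrders

variable {G : Type*} [Group G]

open Subgroup

theorem mem_centralizer_of_mem_normalizer_of_coprime_totient {Q : Subgroup G} [Finite Q]
    [IsCyclic Q] {y : G} (hy : y ∈ normalizer (Q : Set G))
    (hcop : (orderOf y).Coprime (Nat.card Q).totient) : y ∈ centralizer (Q : Set G) := by
  let φ : MulAut Q := Q.normalizerMonoidHom ⟨y, hy⟩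
  have hφy : orderOf φ ∣ orderOf y := by
    simpa only [orderOf_mk] using
      orderOf_map_dvd Q.normalizerMonoidHom (⟨y, hy⟩ : normalizer (Q : Set G))
  have hφQ : orderOf φ ∣ (Nat.card Q).totient := by
    simpa only [IsCyclic.card_mulAut] using orderOf_dvd_natCard φ
  have hφ : φ = 1 := orderOf_eq_one_iff.mp (Nat.eq_one_of_dvd_coprimes hcop hφy hφQ)
  have hker : (⟨y, hy⟩ : normalizer (Q : Set G)) ∈ Q.normalizerMonoidHom.ker := hφ
  rwa [normalizerMonoidHom_ker, mem_subgroupOf] at hker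

theorem index_dvd_card_normalizer_map_sylow {p : ℕ} [Fact p.Prime] {A : Subgroup G} [A.Normal]
    [Finite (Sylow p A)] (P : Sylow p A) :
    A.index ∣ Nat.card (normalizer (P.map A.subtype : Set G)) := by
  calc
    A.index = A.relIndex (normalizer (P.map A.subtype : Set G) ⊔ A) := by
      rw [P.normalizer_sup_eq_top, relIndex_top_right]
    _ = A.relIndex (normalizer (P.map A.subtype : Set G)) := relIndex_sup_right _ _
    _ ∣ Nat.card (normalizer (P.map A.subtype : Set G)) := relIndex_dvd_card _ _

theorem exists_orderOf_eq_mul_of_dvd_index [Finite G] {p q : ℕ} [Fact p.Prime] [Fact q.Prime]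
    (hpq : p ≠ q) (hqp : ¬ q ∣ p - 1) {A : Subgroup G} [A.Normal]
    (hA : (Nat.card A).factorization p = 1) (hq : q ∣ A.index) :
    ∃ g : G, orderOf g = p * q := by
  have hp : p.Prime := Fact.out
  have hq' : q.Prime := Fact.out
  let P : Sylow p A := default
  let Q : Subgroup G := P.map A.subtype
  have hQ : Nat.card Q = p := by
    rw [card_map_of_injective A.subtype_injective, P.card_eq_multiplicity, hA, pow_one]
  have : IsCyclic Q := isCyclic_of_prime_card hQ
  obtain ⟨x, hx⟩ := exists_prime_orderOf_dvd_card' (G := Q) p hQ.symm.dvd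
  obtain ⟨⟨y, hyQ⟩, hy⟩ :=
    exists_prime_orderOf_dvd_card' q (hq.trans (index_dvd_card_normalizer_map_sylow P))
  rw [← orderOf_coe] at hx
  rw [orderOf_mk] at hy
  have hcop : (orderOf y).Coprime (Nat.card Q).totient := by
    rwa [hy, hQ, Nat.totient_prime hp, hq'.coprime_iff_not_dvd]
  have hxy : Commute (x : G) y :=
    mem_centralizer_iff.mp (mem_centralizer_of_mem_normalizer_of_coprime_totient hyQ hcop) x x.2
  refine ⟨x * y, ?_⟩
  rw [hxy.orderOf_mul_eq_mul_orderOf_of_coprime, hx, hy]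
  rwa [hx, hy, Nat.coprime_primes hp hq']

theorem exists_orderOf_eq_orderOf_map [Finite G] {H : Type*} [Group H] (f : G →* H) (g : G) :
    ∃ g' : G, orderOf g' = orderOf (f g) :=
  ⟨g ^ (orderOf g / orderOf (f g)),
    orderOf_pow_orderOf_div (orderOf_pos g).ne' (orderOf_map_dvd f g)⟩

theorem exists_orderOf_eq_mul_of_relIndex [Finite G] {p q : ℕ} [Fact p.Prime] [Fact q.Prime]
    (hpq : p ≠ q) (hqp : ¬ q ∣ p - 1) {N M : Subgroup G} [N.Normal] [M.Normal] (hNM : N ≤ M)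
    (hM : (N.relIndex M).factorization p = 1) (hq : q ∣ M.index) :
    ∃ g : G, orderOf g = p * q := by
  let π := QuotientGroup.mk' N
  have hπ : Function.Surjective π := QuotientGroup.mk'_surjective N
  have hker : π.ker = N := QuotientGroup.ker_mk' N
  have : (M.map π).Normal := Normal.map inferInstance π hπ
  have hcard : Nat.card (M.map π) = N.relIndex M := by rw [← relIndex_ker, hker]
  have hindex : (M.map π).index = M.index := index_map_eq _ hπ (hker.trans_le hNM)
  obtain ⟨g, hg⟩ := exists_orderOf_eq_mul_of_dvd_index hpq hqp (hcard ▸ hM) (hindex ▸ hq)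
  obtain ⟨g, rfl⟩ := hπ g
  exact hg ▸ exists_orderOf_eq_orderOf_map π g

end ElementOrders

section Solvability

variable {G G' S : Type*} [Group G] [Group G'] [Group S]

theorem isSolvable_of_isCyclic [IsCyclic G] : Group.IsSolvable G :=
  Group.isSolvable_of_comm IsCyclic.commGroup.mul_comm

theorem isSolvable_congr (e : G ≃* G') : Group.IsSolvable G ↔ Group.IsSolvable G' :=
  ⟨fun _ ↦ Group.isSolvable_of_surjective (f := e.toMonoidHom) e.surjective,
    fun _ ↦ Group.isSolvable_of_surjective (f := e.symm.toMonoidHom) e.symm.surjective⟩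

theorem isSolvable_quotient_iff_exists_derivedSeries_le (N : Subgroup G) [N.Normal] :
    Group.IsSolvable (G ⧸ N) ↔ ∃ n, derivedSeries G n ≤ N := by
  simp_rw [Group.isSolvable_def, ← map_derivedSeries_eq (QuotientGroup.mk'_surjective N),
    Subgroup.map_eq_bot_iff, QuotientGroup.ker_mk']

theorem derivedSeries_add_le_map_derivedSeries {H : Subgroup G} {m : ℕ}
    (hm : derivedSeries G m ≤ H) (k : ℕ) :
    derivedSeries G (m + k) ≤ (derivedSeries H k).map H.subtype := by
  induction k with
  | zero => rwa [add_zero, derivedSeries_zero, ← MonoidHom.range_eq_map, H.range_subtype]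
  | succ k ih => exact Subgroup.commutator_le_map_commutator ih ih

theorem isSolvable_ker_comp_of_injective (f : G →* S) [Group.IsSolvable f.ker] {i : G' →* G}
    (hi : Function.Injective i) : Group.IsSolvable (f.comp i).ker :=
  Group.isSolvable_of_isSolvable_injective (f := i.subgroupComap f.ker)
    fun _ _ h ↦ Subtype.ext (hi (congrArg Subtype.val h))

variable [IsSimpleGroup S] [Group.IsPerfect S]

theorem le_ker_of_isSolvable {f : G →* S} (hf : Function.Surjective f) (K : Subgroup G) [K.Normal]
    [Group.IsSolvable K] : K ≤ f.ker := by
  have hK : (K.map f).Normal := Subgroup.Normal.map inferInstance f hf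
  have hsolv : Group.IsSolvable (K.map f) :=
    Group.isSolvable_of_surjective (f.subgroupMap_surjective K)
  refine (Subgroup.map_eq_bot_iff K).mp (hK.eq_bot_or_eq_top.resolve_right fun htop ↦ ?_)
  rw [htop] at hsolv
  exact Group.IsPerfect.not_isSolvable _ hsolv

theorem characteristic_ker_of_isSolvable {f : G →* S} (hf : Function.Surjective f)
    [Group.IsSolvable f.ker] : f.ker.Characteristic := by
  refine Subgroup.characteristic_iff_map_le.mpr fun φ ↦ ?_
  have : (f.ker.map φ.toMonoidHom).Normal := Subgroup.Normal.map inferInstance _ φ.surjective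
  have : Group.IsSolvable (f.ker.map φ.toMonoidHom) :=
    Group.isSolvable_of_surjective (φ.toMonoidHom.subgroupMap_surjective f.ker)
  exact le_ker_of_isSolvable hf _

end Solvability

/-- `G` is solvable-by-`S`-by-solvable; for `S` simple and nonabelian this says that `S` is the only
nonsolvable chief factor of `G`. The subgroup mapping onto `S` is taken to be a term of the derived
series, which makes it characteristic and loses nothing when `S` is perfect. -/
def HasUniqueNonsolvableFactor (S G : Type*) [Group S] [Group G] : Prop :=
  ∃ (k : ℕ) (f : derivedSeries G k →* S), Function.Surjective f ∧ Group.IsSolvable f.ker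

namespace HasUniqueNonsolvableFactor

variable {S G G' : Type*} [Group S] [Group G] [Group G']

theorem exists_characteristic [IsSimpleGroup S] [Group.IsPerfect S]
    (h : HasUniqueNonsolvableFactor S G) :
    ∃ (N M : Subgroup G) (_ : N.Characteristic) (_ : M.Characteristic), N ≤ M ∧
      Group.IsSolvable N ∧ Nonempty (M ⧸ N.subgroupOf M ≃* S) ∧ Group.IsSolvable (G ⧸ M) := by
  obtain ⟨k, f, hf, hker⟩ := h
  let M := derivedSeries G k
  have hN : f.ker.Characteristic := characteristic_ker_of_isSolvable hf
  have hNM : (f.ker.map M.subtype).subgroupOf M = f.ker :=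
    Subgroup.comap_map_eq_self_of_injective M.subtype_injective _
  exact ⟨f.ker.map M.subtype, M, inferInstance, inferInstance, Subgroup.map_subtype_le _,
    Group.isSolvable_of_surjective (M.subtype.subgroupMap_surjective f.ker),
    ⟨(QuotientGroup.quotientMulEquivOfEq hNM).trans
      (QuotientGroup.quotientKerEquivOfSurjective f hf)⟩,
    (isSolvable_quotient_iff_exists_derivedSeries_le M).mpr ⟨k, le_rfl⟩⟩

variable [Group.IsPerfect S]

theorem of_injective {i : G' →* G} (hi : Function.Injective i) {f : G' →* S}
    (hf : Function.Surjective f) [Group.IsSolvable f.ker] {k : ℕ}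
    (hk : derivedSeries G k ≤ i.range) : HasUniqueNonsolvableFactor S G := by
  let j : derivedSeries G k →* G' :=
    (MonoidHom.ofInjective hi).symm.toMonoidHom.comp (Subgroup.inclusion hk)
  have hij (x : derivedSeries G k) : i (j x) = x :=
    MonoidHom.apply_ofInjective_symm hi (Subgroup.inclusion hk x)
  have hj : Function.Injective j :=
    (MonoidHom.ofInjective hi).symm.injective.comp (Subgroup.inclusion_injective hk)
  refine ⟨k, f.comp j, fun s ↦ ?_, isSolvable_ker_comp_of_injective f hj⟩
  obtain ⟨x, hx, rfl⟩ : s ∈ (derivedSeries G' k).map f := by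
    rw [map_derivedSeries_eq hf, Group.IsPerfect.derivedSeries_eq_top]
    exact Subgroup.mem_top s
  have hix : i x ∈ derivedSeries G k :=
    map_derivedSeries_le_derivedSeries i k (Subgroup.mem_map_of_mem i hx)
  exact ⟨⟨i x, hix⟩, congrArg f (hi (hij _))⟩

theorem of_mulEquiv (e : G' ≃* G) (h : HasUniqueNonsolvableFactor S G') :
    HasUniqueNonsolvableFactor S G := by
  obtain ⟨k, f, hf, hker⟩ := h
  refine of_injective (i := e.toMonoidHom.comp (derivedSeries G' k).subtype)
    (e.injective.comp (Subgroup.subtype_injective _)) hf (k := k) ?_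
  rw [MonoidHom.range_comp, Subgroup.range_subtype]
  exact derivedSeries_le_map_derivedSeries e.surjective k

variable {H : Subgroup G} [H.Normal]

theorem of_isSolvable_quotient (h : HasUniqueNonsolvableFactor S H) [Group.IsSolvable (G ⧸ H)] :
    HasUniqueNonsolvableFactor S G := by
  obtain ⟨k, f, hf, hker⟩ := h
  obtain ⟨m, hm⟩ := (isSolvable_quotient_iff_exists_derivedSeries_le H).mp inferInstance
  refine of_injective (i := H.subtype.comp (derivedSeries H k).subtype)
    (H.subtype_injective.comp (Subgroup.subtype_injective _)) hf (k := m + k) ?_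
  rw [MonoidHom.range_comp, Subgroup.range_subtype]
  exact derivedSeries_add_le_map_derivedSeries hm k

theorem of_quotient_mulEquiv [hH : Group.IsSolvable H] (e : G ⧸ H ≃* S) :
    HasUniqueNonsolvableFactor S G := by
  let f : G →* S := e.toMonoidHom.comp (QuotientGroup.mk' H)
  have hf : Function.Surjective f := e.surjective.comp (QuotientGroup.mk'_surjective H)
  have hker : f.ker = H := (MonoidHom.ker_mulEquiv_comp _ e).trans (QuotientGroup.ker_mk' H)
  have : Group.IsSolvable f.ker := hker ▸ hH
  exact of_injective (i := MonoidHom.id G) Function.injective_id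
    hf (k := 0)
    (MonoidHom.range_eq_top.mpr Function.surjective_id).ge

variable [IsSimpleGroup S]

theorem exists_orderOf_eq_mul [Finite G] {p q : ℕ} [Fact p.Prime] [Fact q.Prime]
    (hpq : p ≠ q) (hqp : ¬ q ∣ p - 1) (hS : (Nat.card S).factorization p = 1)
    (h : HasUniqueNonsolvableFactor S H) (hq : q ∣ H.index) : ∃ g : G, orderOf g = p * q := by
  obtain ⟨N, M, _, _, hNM, -, ⟨e⟩, -⟩ := h.exists_characteristic
  have hcard : (N.map H.subtype).relIndex (M.map H.subtype) = Nat.card S := by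
    rw [Subgroup.relIndex_map_map_of_injective N M H.subtype_injective]
    exact Nat.card_congr e.toEquiv
  have : (N.map H.subtype).Normal := ConjAct.normal_of_characteristic_of_normal
  have : (M.map H.subtype).Normal := ConjAct.normal_of_characteristic_of_normal
  exact exists_orderOf_eq_mul_of_relIndex hpq hqp (Subgroup.map_mono hNM) (hcard ▸ hS)
    (hq.trans (Subgroup.index_dvd_of_le (Subgroup.map_subtype_le M)))

end HasUniqueNonsolvableFactor

theorem isSolvable_or_hasUniqueNonsolvableFactor_of_normal {S G : Type*} [Group S]
    [IsSimpleGroup S] [Group.IsPerfect S] [Group G] [Finite G] {p q : ℕ} [Fact p.Prime]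
    [Fact q.Prime] (hpq : p ≠ q) (hqp : ¬ q ∣ p - 1) (hSp : (Nat.card S).factorization p = 1)
    (hSq : q ∣ Nat.card S) (hG : ¬ ∃ g : G, orderOf g = p * q) {H : Subgroup G} [H.Normal]
    (hH : Group.IsSolvable H ∨ HasUniqueNonsolvableFactor S H)
    (hquot : Group.IsSolvable (G ⧸ H) ∨ Nonempty (G ⧸ H ≃* S)) :
    Group.IsSolvable G ∨ HasUniqueNonsolvableFactor S G := by
  rcases hH with hH | hH <;> rcases hquot with hquot | ⟨⟨e⟩⟩
  · exact .inl ((Group.isSolvable_iff_subgroup_quotient H).mpr ⟨hH, hquot⟩)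
  · exact .inr (.of_quotient_mulEquiv e)
  · exact .inr hH.of_isSolvable_quotient
  · have hindex : H.index = Nat.card S := Nat.card_congr e.toEquiv
    exact absurd (hH.exists_orderOf_eq_mul hpq hqp hSp (hindex ▸ hSq)) hG

section AlternatingGroup

theorem card_alternatingGroup_fin_five : Nat.card (alternatingGroup (Fin 5)) = 60 := by
  rw [nat_card_alternatingGroup, Nat.card_fin]
  rfl

theorem factorization_card_alternatingGroup_fin_five_three :
    (Nat.card (alternatingGroup (Fin 5))).factorization 3 = 1 := by
  rw [card_alternatingGroup_fin_five, show 60 = 3 * 20 from rfl,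
    Nat.factorization_eq_of_coprime_left (by norm_num) (by norm_num),
    Nat.prime_three.factorization_self]

instance : IsSimpleGroup (alternatingGroup (Fin 5)) :=
  alternatingGroup.isSimpleGroup (by simp)

instance : Group.IsPerfect (alternatingGroup (Fin 5)) :=
  ⟨commutator_alternatingGroup_eq_top (by simp)⟩

end AlternatingGroup

theorem IsPseudoSolvable.isSolvable_or_hasUniqueNonsolvableFactor {G : Type*} [Group G] [Finite G]
    (hG : IsPseudoSolvable G) (h15 : ¬ ∃ g : G, orderOf g = 15) :
    Group.IsSolvable G ∨ HasUniqueNonsolvableFactor (alternatingGroup (Fin 5)) G := by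
  obtain ⟨n, H, hbot, htop, hstep⟩ := hG
  have hH (i : Fin (n + 1)) :
      Group.IsSolvable (H i) ∨ HasUniqueNonsolvableFactor (alternatingGroup (Fin 5)) (H i) := by
    induction i using Fin.induction with
    | zero => rw [hbot]; exact .inl inferInstance
    | succ i ih =>
      obtain ⟨hle, hnormal, hfactor⟩ := hstep i
      let e := (Subgroup.subgroupOfEquivOfLe hle).symm
      have h15' : ¬ ∃ g : H i.succ, orderOf g = 3 * 5 :=
        fun ⟨g, hg⟩ ↦ h15 ⟨g, (Subgroup.orderOf_coe g).trans hg⟩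
      have : Fact (Nat.Prime 5) := ⟨Nat.prime_five⟩
      exact isSolvable_or_hasUniqueNonsolvableFactor_of_normal (by norm_num) (by norm_num)
        factorization_card_alternatingGroup_fin_five_three
        (by rw [card_alternatingGroup_fin_five]; norm_num) h15'
        (ih.imp (isSolvable_congr e).mp (.of_mulEquiv e))
        (hfactor.imp_left fun (_ : IsCyclic _) ↦ isSolvable_of_isCyclic)
  let e : H (Fin.last n) ≃* G := (MulEquiv.subgroupCongr htop).trans Subgroup.topEquiv
  exact (hH (Fin.last n)).imp (isSolvable_congr e).mp (.of_mulEquiv e)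

/-- A non-solvable pseudo-solvable group with no element of order 15 has exactly one
non-solvable chief factor, isomorphic to `A₅`: there are normal subgroups `N ≤ M` of
`G` with `N` solvable, `M/N ≅ A₅` and `G/M` solvable. -/
theorem unique_A5_section
    (G : Type*) [Group G] [Finite G] (hG : IsPseudoSolvable G) (hns : ¬ IsSolvable G)
    (h15 : ¬ ∃ g : G, orderOf g = 15) :
    ∃ (N M : Subgroup G) (_ : N.Normal) (hMn : M.Normal), N ≤ M ∧
      IsSolvable N ∧
      (∃ hn : (N.subgroupOf M).Normal,
        haveI := hn
        Nonempty ((M ⧸ N.subgroupOf M) ≃* alternatingGroup (Fin 5))) ∧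
      (haveI := hMn
       IsSolvable (G ⧸ M)) := by
  obtain ⟨N, M, _, _, hNM, hN, hMN, hGM⟩ :=
    ((hG.isSolvable_or_hasUniqueNonsolvableFactor h15).resolve_left hns).exists_characteristic
  exact ⟨N, M, inferInstance, inferInstance, hNM, hN, ⟨inferInstance, hMN⟩, hGM⟩
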